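/- Let G : D ⥤ C be a functor between locally presentable categories admitting a left adjoint F. Then G is conservative if and only if the essential image of F generates D under colimits. -/

import Mathlib

open CategoryTheory CategoryTheory.Limits

universe w v u

namespace Paper

/-- A full subcategory (given by a set of objects) is closed under isomorphisms. -/
def IsoClosed {C : Type*} [Category C] (P : Set C) : Prop :=
  ∀ ⦃X Y : C⦄, X ∈ P → Nonempty (X ≅ Y) → Y ∈ P

/-- A set of objects is closed under all colimits of shapes `J : Type w` that exist in `C`:
whenever a diagram valued in `P` admits a colimit cocone, its point belongs to `P`. -/
def ColimitClosed {C : Type u} [Category.{v} C] (P : Set C) : Prop :=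
  ∀ (J : Type w) (_ : SmallCategory J) (F : J ⥤ C) (c : Cocone F),
    Nonempty (IsColimit c) → (∀ j : J, F.obj j ∈ P) → c.pt ∈ P

/-- A set of objects is closed under all limits of shapes `J : Type w` that exist in `C`. -/
def LimitClosed {C : Type u} [Category.{v} C] (P : Set C) : Prop :=
  ∀ (J : Type w) (_ : SmallCategory J) (F : J ⥤ C) (c : Cone F),
    Nonempty (IsLimit c) → (∀ j : J, F.obj j ∈ P) → c.pt ∈ P

/-- `S` generates `C` under colimits: the only set of objects containing `S` which is
closed under isomorphisms and under all colimits that exist in `C` is all of `C`. -/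
def GeneratesUnderColimits {C : Type u} [Category.{v} C] (S : Set C) : Prop :=
  ∀ P : Set C, S ⊆ P → IsoClosed P → ColimitClosed.{w} P → ∀ X : C, X ∈ P

/-- The smallest set of objects containing `S` which is closed under isomorphisms and
under all colimits (of shapes in `Type w`) that exist in `C`. -/
def colimitClosure {C : Type u} [Category.{v} C] (S : Set C) : Set C :=
  ⋂₀ {P : Set C | S ⊆ P ∧ IsoClosed P ∧ ColimitClosed.{w} P}

/-- A category `J` is `κ`-filtered if every diagram indexed by a small category with
fewer than `κ` arrows admits a cocone. -/
def IsCardinalFiltered (J : Type w) [SmallCategory J] (κ : Cardinal.{w}) : Prop :=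
  ∀ (K : Type w) (_ : SmallCategory K) (F : K ⥤ J),
    Cardinal.mk (Arrow K) < κ → Nonempty (Cocone F)

/-- A set of objects is closed under colimits of `κ`-filtered shapes that exist in `C`. -/
def FilteredColimitClosed {C : Type u} [Category.{v} C] (κ : Cardinal.{w}) (P : Set C) :
    Prop :=
  ∀ (J : Type w) (_ : SmallCategory J), IsCardinalFiltered J κ →
    ∀ (F : J ⥤ C) (c : Cocone F),
      Nonempty (IsColimit c) → (∀ j : J, F.obj j ∈ P) → c.pt ∈ P

/-- An object `X` of a large category `C` is `κ`-presentable if its Hom-functor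
`Hom(X, -) : C ⥤ Type u` preserves colimits of `κ`-filtered (small) shapes. -/
def IsPresentableObj {C : Type (u + 1)} [Category.{u} C] (κ : Cardinal.{u}) (X : C) : Prop :=
  ∀ (J : Type u) (_ : SmallCategory J), IsCardinalFiltered J κ →
    PreservesColimitsOfShape J (coyoneda.obj (Opposite.op X))

/-- A large category `C` is locally presentable if it has all small colimits and there is
a regular cardinal `κ` such that `C` has, up to isomorphism, only a small set of
`κ`-presentable objects and every object of `C` is a `κ`-filtered colimit of
`κ`-presentable objects. -/
def LocallyPresentable (C : Type (u + 1)) [Category.{u} C] : Prop :=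
  HasColimits C ∧
    ∃ κ : Cardinal.{u}, κ.IsRegular ∧
      (∃ S : Set C, Small.{u} S ∧
        ∀ X : C, IsPresentableObj κ X → ∃ Y ∈ S, Nonempty (X ≅ Y)) ∧
      ∀ X : C, ∃ (J : Type u) (_ : SmallCategory J) (F : J ⥤ C) (c : Cocone F),
        IsCardinalFiltered J κ ∧ (∀ j : J, IsPresentableObj κ (F.obj j)) ∧
        c.pt = X ∧ Nonempty (IsColimit c)

end Paper

namespace CategoryTheory

/-- A `w`-small property of presentable objects consists of `κ`-presentable objects
for some regular cardinal `κ`. -/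
lemma ObjectProperty.exists_le_isCardinalPresentable {C : Type u} [Category.{v} C]
    (P : ObjectProperty C) [ObjectProperty.Small.{w} P]
    (hP : ∀ X, P X → IsPresentable.{w} X) :
    ∃ (κ : Cardinal.{w}) (_ : Fact κ.IsRegular), P ≤ isCardinalPresentable C κ := by
  choose κ hκ hκ' using fun X : Subtype P ↦ (hP X.1 X.2).exists_cardinal
  obtain ⟨κ', h₁, h₂⟩ :=
    HasCardinalLT.exists_regular_cardinal_forall.{w} (fun X : Subtype P ↦ (κ X).ord.ToType)
  have : Fact κ'.IsRegular := ⟨h₁⟩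
  refine ⟨κ', this, fun X hX ↦ ?_⟩
  have : IsCardinalPresentable X (κ ⟨X, hX⟩) := hκ' ⟨X, hX⟩
  have hle : κ ⟨X, hX⟩ ≤ κ' :=
    le_of_lt (by simpa [hasCardinalLT_iff_cardinal_mk_lt] using h₂ ⟨X, hX⟩)
  exact isCardinalPresentable_of_le X hle

section

variable {C : Type u} [Category.{v} C] [HasColimitsOfSize.{w, w} C] [LocallySmall.{w} C]
  {P : ObjectProperty C} [ObjectProperty.Small.{w} P] {κ : Cardinal.{w}} [Fact κ.IsRegular]

/-- If a small property `P` of `κ`-presentable objects detects isomorphisms in a cocomplete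
category, then any object is a colimit of objects in the closure of `P` under
`κ`-small colimits. -/
lemma ObjectProperty.exists_colimitsOfShape_colimitsCardinalClosure
    (hP : ∀ ⦃X Y : C⦄ (f : X ⟶ Y),
      (∀ G, P G → Function.Bijective (fun g : G ⟶ X ↦ g ≫ f)) → IsIso f)
    (hP' : P ≤ isCardinalPresentable C κ) (X : C) :
    ∃ (J : Type w) (_ : SmallCategory J),
      (P.colimitsCardinalClosure κ).colimitsOfShape J X := by
  let Φ := CostructuredArrow.proj (P.colimitsCardinalClosure κ).ι X ⋙
    (P.colimitsCardinalClosure κ).ι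
  let c : Cocone Φ :=
    { pt := X
      ι := { app j := j.hom
             naturality i j f := (CostructuredArrow.w f).trans (Category.comp_id _).symm } }
  have : HasColimitsOfShape (CostructuredArrow (P.colimitsCardinalClosure κ).ι X) C :=
    hasColimitsOfShape_of_equivalence
      (equivSmallModel.{w} (CostructuredArrow (P.colimitsCardinalClosure κ).ι X)).symm
  have : (P.colimitsCardinalClosure κ).IsClosedUnderColimitsOfShape WalkingParallelPair := by
    apply ObjectProperty.isClosedUnderColimitsOfShape_colimitsCardinalClosure
    refine .of_le ?_ (Cardinal.IsRegular.aleph0_le Fact.out)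
    simp only [hasCardinalLT_aleph0_iff]
    infer_instance
  have : IsIso (colimit.desc Φ c) := by
    refine hP _ fun G hG ↦ ⟨fun (g₁ : G ⟶ colimit Φ) (g₂ : G ⟶ colimit Φ)
      (h : g₁ ≫ colimit.desc Φ c = g₂ ≫ colimit.desc Φ c) ↦ ?_,
      fun g ↦ ?_⟩
    · have : IsCardinalPresentable G κ := hP' _ hG
      obtain ⟨j, φ₁, φ₂, rfl, rfl⟩ :
          ∃ (j : CostructuredArrow (P.colimitsCardinalClosure κ).ι X)
            (φ₁ φ₂ : G ⟶ Φ.obj j), φ₁ ≫ colimit.ι _ _ = g₁ ∧ φ₂ ≫ colimit.ι _ _ = g₂ := by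
        obtain ⟨j₁, f₁, hf₁⟩ :=
          IsCardinalPresentable.exists_hom_of_isColimit κ (colimit.isColimit _) g₁
        obtain ⟨j₂, f₂, hf₂⟩ :=
          IsCardinalPresentable.exists_hom_of_isColimit κ (colimit.isColimit _) g₂
        exact ⟨IsFiltered.max j₁ j₂, f₁ ≫ Φ.map (IsFiltered.leftToMax j₁ j₂),
          f₂ ≫ Φ.map (IsFiltered.rightToMax j₁ j₂), by simpa, by simpa⟩
      let obj : (P.colimitsCardinalClosure κ).FullSubcategory :=
        ⟨coequalizer φ₁ φ₂, by
          apply ObjectProperty.prop_colimit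
          rintro (_ | _)
          · exact P.le_colimitsCardinalClosure _ _ hG
          · exact j.left.2⟩
      let a : (P.colimitsCardinalClosure κ).ι.obj obj ⟶ X :=
        coequalizer.desc (c.ι.app j)
          (by simpa only [Category.assoc, colimit.ι_desc] using h)
      let ψ : j ⟶ CostructuredArrow.mk a :=
        CostructuredArrow.homMk (ObjectProperty.homMk (coequalizer.π _ _))
          (coequalizer.π_desc _ _)
      rw [← colimit.w Φ ψ]
      apply coequalizer.condition_assoc
    · let γ : CostructuredArrow (P.colimitsCardinalClosure κ).ι X :=
        CostructuredArrow.mk (Y := ⟨G, P.le_colimitsCardinalClosure _ _ hG⟩) (by exact g)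
      exact ⟨colimit.ι Φ γ, colimit.ι_desc c γ⟩
  let e := equivSmallModel.{w} (CostructuredArrow (P.colimitsCardinalClosure κ).ι X)
  have hX : IsColimit c :=
    IsColimit.ofIsoColimit (colimit.isColimit Φ)
      (Cocone.ext (asIso (colimit.desc Φ c)))
  exact ⟨SmallModel.{w} (CostructuredArrow (P.colimitsCardinalClosure κ).ι X), inferInstance,
    ⟨{  diag := _
        ι := _
        isColimit := hX.whiskerEquivalence e.symm
        prop_diag_obj j := (e.symm.functor.obj j).left.2 }⟩⟩

end

/-- If `f` is mapped to an isomorphism by a right adjoint, then postcomposition with `f`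
is bijective on morphisms from objects in the image of the left adjoint. -/
lemma Adjunction.bijective_comp_of_isIso_map {C D : Type*} [Category* C] [Category* D]
    {F : C ⥤ D} {G : D ⥤ C} (adj : F ⊣ G) {X Y : D} (f : X ⟶ Y) [IsIso (G.map f)] (Z : C) :
    Function.Bijective (fun g : F.obj Z ⟶ X ↦ g ≫ f) := by
  have : (fun g : F.obj Z ⟶ X ↦ g ≫ f) =
      (adj.homEquiv Z Y).symm ∘ (fun g ↦ g ≫ G.map f) ∘ adj.homEquiv Z X := by
    ext g
    simp [← adj.homEquiv_naturality_right]
  rw [this]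
  exact (Equiv.bijective _).comp
    (((asIso (G.map f)).homToEquiv).bijective.comp (Equiv.bijective _))

/-- If `P` is a strong generator of `C` and `G : D ⥤ C` is a conservative functor
with left adjoint `F`, then the image of `P` under `F` detects isomorphisms. -/
lemma Adjunction.isIso_of_bijective_comp {C D : Type*} [Category* C] [Category* D]
    {F : C ⥤ D} {G : D ⥤ C} (adj : F ⊣ G) [G.ReflectsIsomorphisms] {P : ObjectProperty C}
    (hP : P.IsStrongGenerator) {X Y : D} (f : X ⟶ Y)
    (hf : ∀ Z, P Z → Function.Bijective (fun g : F.obj Z ⟶ X ↦ g ≫ f)) : IsIso f := by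
  have hGf (Z : C) (hZ : P Z) : Function.Bijective (fun g : Z ⟶ G.obj X ↦ g ≫ G.map f) := by
    have : (fun g : Z ⟶ G.obj X ↦ g ≫ G.map f) =
        adj.homEquiv Z Y ∘ (fun g ↦ g ≫ f) ∘ (adj.homEquiv Z X).symm := by
      ext g
      simp [adj.homEquiv_naturality_right]
    rw [this]
    exact (Equiv.bijective _).comp ((hf Z hZ).comp (Equiv.bijective _))
  have : Mono (G.map f) := by
    rw [hP.isSeparating.mono_iff]
    exact fun Z hZ g₁ g₂ h ↦ (hGf Z hZ).1 h
  have := hP.isIso_of_mono (G.map f) (fun Z hZ ↦ (hGf Z hZ).2)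
  exact isIso_of_reflects_iso f G

end CategoryTheory

namespace Paper

lemma isCardinalFiltered_iff (J : Type w) [SmallCategory J] (κ : Cardinal.{w})
    [Fact κ.IsRegular] :
    IsCardinalFiltered J κ ↔ CategoryTheory.IsCardinalFiltered J κ := by
  refine ⟨fun h ↦ ⟨fun {A} _ F hA ↦ h A _ F ?_⟩, fun h A _ F hA ↦ h.nonempty_cocone F ?_⟩
  · rwa [hasCardinalLT_iff_cardinal_mk_lt] at hA
  · rwa [hasCardinalLT_iff_cardinal_mk_lt]

lemma isPresentableObj_iff {C : Type (u + 1)} [Category.{u} C] (κ : Cardinal.{u})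
    [Fact κ.IsRegular] (X : C) :
    IsPresentableObj κ X ↔ IsCardinalPresentable X κ :=
  ⟨fun h ↦ ⟨fun J _ hJ ↦ h J _ ((isCardinalFiltered_iff J κ).2 hJ)⟩,
    fun h J _ hJ ↦ by
      have := (isCardinalFiltered_iff J κ).1 hJ
      exact h.preservesColimitOfShape J⟩

lemma LocallyPresentable.isLocallyPresentable {C : Type (u + 1)} [Category.{u} C]
    (hC : LocallyPresentable C) : IsLocallyPresentable.{u} C := by
  obtain ⟨_, κ, hκ, ⟨S, hS, hS'⟩, h⟩ := hC
  have : Fact κ.IsRegular := ⟨hκ⟩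
  have : ObjectProperty.EssentiallySmall.{u} (isCardinalPresentable C κ) :=
    ⟨fun X ↦ X ∈ S, hS, fun X hX ↦ by
      obtain ⟨Y, hY, e⟩ := hS' X ((isPresentableObj_iff κ X).2 hX)
      exact ⟨Y, hY, e⟩⟩
  have hgen : (isCardinalPresentable C κ).IsCardinalFilteredGenerator κ :=
    { le_isCardinalPresentable := le_rfl
      exists_colimitsOfShape X := by
        obtain ⟨J, _, F, c, hJ, hF, rfl, ⟨hc⟩⟩ := h X
        exact ⟨J, inferInstance, (isCardinalFiltered_iff J κ).1 hJ,
          ⟨{  diag := F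
              ι := c.ι
              isColimit := hc
              prop_diag_obj j := (isPresentableObj_iff κ _).1 (hF j) }⟩⟩ }
  have := hgen.hasCardinalFilteredGenerator
  exact ⟨κ, inferInstance, {}⟩

lemma ColimitClosed.isClosedUnderColimitsOfShape {C : Type u} [Category.{v} C]
    {P : ObjectProperty C} (hP : ColimitClosed.{w} P) (J : Type w) [SmallCategory J] :
    P.IsClosedUnderColimitsOfShape J where
  colimitsOfShape_le := by
    rintro X ⟨p⟩
    exact hP J _ p.diag p.cocone ⟨p.isColimit⟩ p.prop_diag_obj

/-- The class of objects `Z` such that postcomposition with `f` is bijective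
on morphisms from `Z` is closed under colimits. -/
lemma colimitClosed_setOf_bijective_comp {C : Type u} [Category.{v} C] {X Y : C} (f : X ⟶ Y) :
    ColimitClosed.{w} {Z : C | Function.Bijective (fun g : Z ⟶ X ↦ g ≫ f)} := by
  rintro J _ K c ⟨hc⟩ hK
  refine ⟨fun g₁ g₂ h ↦ hc.hom_ext fun j ↦ (hK j).1 ?_, fun g ↦ ?_⟩
  · simpa using c.ι.app j ≫= h
  · choose φ hφ using fun j ↦ (hK j).2 (c.ι.app j ≫ g)
    dsimp at hφ
    refine ⟨hc.desc ⟨X, { app := φ, naturality i j a := (hK i).1 ?_ }⟩, hc.hom_ext fun j ↦ ?_⟩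
    · simp [hφ]
    · simp [hφ]

lemma isoClosed_setOf_bijective_comp {C : Type u} [Category.{v} C] {X Y : C} (f : X ⟶ Y) :
    IsoClosed {Z : C | Function.Bijective (fun g : Z ⟶ X ↦ g ≫ f)} := by
  rintro Z Z' hZ ⟨e⟩
  refine ⟨fun g₁ g₂ h ↦ ?_, fun g ↦ ?_⟩
  · rw [← cancel_epi e.hom]
    exact hZ.1 (by simpa using e.hom ≫= h)
  · obtain ⟨g', hg'⟩ := hZ.2 (e.hom ≫ g)
    dsimp at hg'
    exact ⟨e.inv ≫ g', by simp [hg']⟩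

/-!
STATEMENT 10 (`Conserv_Generates`): For a functor `G : D ⥤ C` between locally
presentable categories with left adjoint `F`, `G` is conservative if and only if
the essential image of `F` generates `D` under colimits.
-/

theorem conserv_generates {D C : Type (u + 1)} [Category.{u} D] [Category.{u} C]
    (hD : LocallyPresentable D) (hC : LocallyPresentable C)
    {F : C ⥤ D} {G : D ⥤ C} (adj : F ⊣ G) :
    G.ReflectsIsomorphisms ↔ GeneratesUnderColimits.{u} F.essImage := by
  refine ⟨fun _ P hP hiso hcolim X ↦ ?_, fun h ↦ ⟨fun {X Y} f _ ↦ ?_⟩⟩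
  · have := hD.1
    have := hD.isLocallyPresentable
    have := hC.isLocallyPresentable
    obtain ⟨κC, _, _⟩ := IsLocallyPresentable.exists_cardinal.{u} C
    obtain ⟨S, _, hS⟩ := HasCardinalFilteredGenerator.exists_small_generator C κC
    obtain ⟨κ, _, hκ⟩ := (S.strictMap F).exists_le_isCardinalPresentable.{u}
      (fun _ _ ↦ inferInstance)
    obtain ⟨J, _, hX⟩ := ObjectProperty.exists_colimitsOfShape_colimitsCardinalClosure
      (fun _ _ f hf ↦ adj.isIso_of_bijective_comp hS.isStrongGenerator f
        (fun Z hZ ↦ hf _ ⟨Z, hZ⟩)) hκ X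
    let Q : ObjectProperty D := P
    have : Q.IsClosedUnderIsomorphisms := ⟨fun e hX ↦ hiso hX ⟨e⟩⟩
    have hQ (J : Type u) [SmallCategory J] : Q.IsClosedUnderColimitsOfShape J :=
      ColimitClosed.isClosedUnderColimitsOfShape hcolim J
    have hle : (S.strictMap F).colimitsCardinalClosure κ ≤ Q := by
      refine ObjectProperty.colimitsCardinalClosure_le _ κ (fun J _ _ ↦ hQ J) ?_
      rintro _ ⟨Z, _⟩
      exact hP (F.obj_mem_essImage Z)
    exact (hQ J).colimitsOfShape_le _ (ObjectProperty.colimitsOfShape_monotone J hle _ hX)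
  · have hf : ∀ Z : D, Function.Bijective (fun g : Z ⟶ X ↦ g ≫ f) := by
      refine h _ ?_ (isoClosed_setOf_bijective_comp f) (colimitClosed_setOf_bijective_comp f)
      rintro Z ⟨W, ⟨e⟩⟩
      exact isoClosed_setOf_bijective_comp f (adj.bijective_comp_of_isIso_map f W) ⟨e⟩
    obtain ⟨g, hg⟩ := (hf Y).2 (𝟙 Y)
    dsimp at hg
    exact ⟨g, (hf X).1 (by simp [hg]), hg⟩

end Paper
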